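/- For every ε > 0 there exists a function q ∈ C_0^∞(ℝ²) with support in [-1,1]², not identically zero, such that ∫_{-1}^{1} q(x, y₀) dx = 0 for every y₀ and ∫_{-1}^{1} q(x₀, y) dy = 0 for every x₀, and, with q^x(x₀,y) = ∫_{-1}^{x₀} q(x,y) dx and q^y(x,y₀) = ∫_{-1}^{y₀} q(x,y) dy, one has ‖∂_x q^y‖_{L¹} + ‖∂_y q^x‖_{L¹} + ‖q^x‖_∞ + ‖q^y‖_∞ < ε ‖q‖_{L¹}. -/

import Mathlib

open MeasureTheory Real

noncomputable section

/-- First partial derivative (with respect to the first coordinate) on `ℝ²`. -/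
def pd1 (f : ℝ × ℝ → ℝ) (p : ℝ × ℝ) : ℝ := fderiv ℝ f p (1, 0)

/-- Second partial derivative (with respect to the second coordinate) on `ℝ²`. -/
def pd2 (f : ℝ × ℝ → ℝ) (p : ℝ × ℝ) : ℝ := fderiv ℝ f p (0, 1)

/-- `q^x(x₀,y) = ∫_{-1}^{x₀} q(x,y) dx`. -/
def intX (q : ℝ × ℝ → ℝ) (p : ℝ × ℝ) : ℝ := ∫ t in (-1 : ℝ)..p.1, q (t, p.2)

/-- `q^y(x,y₀) = ∫_{-1}^{y₀} q(x,y) dy`. -/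
def intY (q : ℝ × ℝ → ℝ) (p : ℝ × ℝ) : ℝ := ∫ t in (-1 : ℝ)..p.2, q (p.1, t)

/-!
The function `q` is the mixed derivative `∂₂ ∂₁ u` of a potential `u`, so that `q^x = ∂₂ u`,
`q^y = ∂₁ u`, and `∂_x q^y`, `∂_y q^x` are the pure second derivatives of `u`. It is therefore
enough to make `∂₂ ∂₁ u` large in `L¹` while the gradient stays bounded uniformly and the pure
second derivatives stay bounded in `L¹`, which is Ornstein's non-inequality.

Starting from a bump `R₀`, multiply repeatedly by `1 + cos (l (x ± y))`, with rapidly increasing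
frequencies `l`, and add to the potential the corrugations `-l⁻² R cos (l (x ± y))`. Their gradients
are negligible, and as `(± 1)² = 1` both pure second derivatives of `u` follow `R - R₀`, where the
Riesz product `R ≥ 0` keeps its integral up to a small error. The mixed derivative `S` instead
collects the terms `± R cos (l (x ± y))` with alternating signs. Tested against
`ψ = ∏ (1 ± i α cos (l (x ± y)))`, each pair of them adds, in the limit, at least `α ∫ R₀` to the
imaginary part of `∫ S ψ`; with `2 n²` factors and `α = 1 / n` the function `ψ` is bounded
independently of `n`, whereas `∫ S ψ` grows like `n`.
-/

open Filter Function Set Topology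
open scoped ContDiff

section DirectionalDerivative

variable {E : Type*} [NormedAddCommGroup E] [NormedSpace ℝ E]

/-- The derivative of `f` along the vector `v`. Along the two basis vectors of `ℝ × ℝ` it unfolds to
`pd1` and `pd2`; iterating it keeps second derivatives scalar-valued. -/
def dirDeriv (v : E) (f : E → ℝ) (x : E) : ℝ := fderiv ℝ f x v

lemma contDiff_dirDeriv {f : E → ℝ} (hf : ContDiff ℝ ∞ f) (v : E) : ContDiff ℝ ∞ (dirDeriv v f) :=
  (hf.fderiv_right (m := ∞) (by simp)).clm_apply contDiff_const

lemma tsupport_dirDeriv_subset (v : E) (f : E → ℝ) : tsupport (dirDeriv v f) ⊆ tsupport f :=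
  tsupport_fderiv_apply_subset ℝ v

lemma hasCompactSupport_dirDeriv {f : E → ℝ} (hf : HasCompactSupport f) (v : E) :
    HasCompactSupport (dirDeriv v f) :=
  hf.fderiv_apply (𝕜 := ℝ) v

lemma dirDeriv_add {f g : E → ℝ} (hf : Differentiable ℝ f) (hg : Differentiable ℝ g) (v : E) :
    dirDeriv v (f + g) = dirDeriv v f + dirDeriv v g := by
  ext x
  simp [dirDeriv, fderiv_add (hf x) (hg x)]

lemma dirDeriv_dirDeriv_add {f g : E → ℝ} (hf : ContDiff ℝ ∞ f) (hg : ContDiff ℝ ∞ g) (v w : E) :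
    dirDeriv w (dirDeriv v (f + g)) = dirDeriv w (dirDeriv v f) + dirDeriv w (dirDeriv v g) := by
  rw [dirDeriv_add (hf.differentiable (by simp)) (hg.differentiable (by simp)),
    dirDeriv_add ((contDiff_dirDeriv hf v).differentiable (by simp))
      ((contDiff_dirDeriv hg v).differentiable (by simp))]

lemma dirDeriv_dirDeriv {f : E → ℝ} (hf : ContDiff ℝ 2 f) (v w x : E) :
    dirDeriv w (dirDeriv v f) x = fderiv ℝ (fderiv ℝ f) x w v := by
  have hf' : DifferentiableAt ℝ (fderiv ℝ f) x :=
    (hf.fderiv_right (m := 1) (by norm_num)).differentiable one_ne_zero x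
  have h : HasFDerivAt (dirDeriv v f) _ x := hf'.hasFDerivAt.clm_apply (hasFDerivAt_const v x)
  simp [dirDeriv, h.fderiv]

lemma dirDeriv_comm {f : E → ℝ} (hf : ContDiff ℝ 2 f) (v w : E) :
    dirDeriv w (dirDeriv v f) = dirDeriv v (dirDeriv w f) := by
  ext x
  rw [dirDeriv_dirDeriv hf, dirDeriv_dirDeriv hf]
  exact (hf.contDiffAt.isSymmSndFDerivAt (by simp)).eq w v

lemma dirDeriv_const_mul {f : E → ℝ} (hf : Differentiable ℝ f) (c : ℝ) (v : E) :
    dirDeriv v (fun x => c * f x) = fun x => c * dirDeriv v f x := by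
  ext x
  simp [dirDeriv, fderiv_const_mul (hf x)]

lemma dirDeriv_mul_cos {f : E → ℝ} (hf : Differentiable ℝ f) (L : E →L[ℝ] ℝ) (l : ℝ) (v : E) :
    dirDeriv v (fun x => f x * cos (l * L x)) =
      fun x => dirDeriv v f x * cos (l * L x) - l * L v * (f x * sin (l * L x)) := by
  ext x
  have hphase : HasFDerivAt (fun x => l * L x) (l • L) x := L.hasFDerivAt.const_mul l
  have h : HasFDerivAt (fun x => f x * cos (l * L x)) _ x := (hf x).hasFDerivAt.mul hphase.cos
  simp only [dirDeriv, h.fderiv, _root_.add_apply, _root_.smul_apply, smul_eq_mul]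
  ring

lemma dirDeriv_mul_sin {f : E → ℝ} (hf : Differentiable ℝ f) (L : E →L[ℝ] ℝ) (l : ℝ) (v : E) :
    dirDeriv v (fun x => f x * sin (l * L x)) =
      fun x => dirDeriv v f x * sin (l * L x) + l * L v * (f x * cos (l * L x)) := by
  ext x
  have hphase : HasFDerivAt (fun x => l * L x) (l • L) x := L.hasFDerivAt.const_mul l
  have h : HasFDerivAt (fun x => f x * sin (l * L x)) _ x := (hf x).hasFDerivAt.mul hphase.sin
  simp only [dirDeriv, h.fderiv, _root_.add_apply, _root_.smul_apply, smul_eq_mul]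
  ring

lemma integral_dirDeriv_eq_zero [FiniteDimensional ℝ E] [MeasurableSpace E] [BorelSpace E]
    {μ : Measure E} [μ.IsAddHaarMeasure] {f : E → ℝ} (hf : ContDiff ℝ 1 f)
    (hf' : HasCompactSupport f) (v : E) : ∫ x, dirDeriv v f x ∂μ = 0 := by
  have hd : Integrable (dirDeriv v f) μ :=
    ((hf.continuous_fderiv one_ne_zero).clm_apply continuous_const).integrable_of_hasCompactSupport
      (hasCompactSupport_dirDeriv hf' v)
  simpa [dirDeriv] using integral_mul_fderiv_eq_neg_fderiv_mul_of_integrable (μ := μ)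
    (f := fun _ => (1 : ℝ)) (g := f) (v := v) (by simp)
    (by simpa only [one_mul] using! hd)
    (by simpa using hf.continuous.integrable_of_hasCompactSupport hf')
    (fun _ _ => differentiableAt_const _) (fun x _ => hf.differentiable one_ne_zero x)

end DirectionalDerivative

section Corrugation

lemma tendstoUniformly_mul_zero {ι α : Type*} {f : Filter ι} {c : ι → ℝ} {F : ι → α → ℝ} {C : ℝ}
    (hc : Tendsto c f (𝓝 0)) (hF : ∀ i x, |F i x| ≤ C) :
    TendstoUniformly (fun i x => c i * F i x) 0 f := by
  rw [Metric.tendstoUniformly_iff]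
  intro ε hε
  have hcC : Tendsto (fun i => |c i| * C) f (𝓝 0) := by simpa using hc.abs.mul_const C
  filter_upwards [hcC.eventually_lt_const hε] with i hi x
  simp only [Pi.zero_apply, dist_zero_left, norm_mul, Real.norm_eq_abs]
  exact (mul_le_mul_of_nonneg_left (hF i x) (abs_nonneg _)).trans_lt hi

lemma eventually_abs_add_lt {ι α : Type*} {f : Filter ι} {F : ι → α → ℝ} {g : α → ℝ} {a b : ℝ}
    (hg : ∀ x, |g x| < a) (hF : TendstoUniformly F 0 f) (hab : a < b) :
    ∀ᶠ i in f, ∀ x, |g x + F i x| < b := by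
  filter_upwards [Metric.tendstoUniformly_iff.mp hF (b - a) (sub_pos.mpr hab)] with i hi x
  have hFx : |F i x| < b - a := by simpa using hi x
  linarith [abs_add_le (g x) (F i x), hg x]

variable {E : Type*} [NormedAddCommGroup E] [NormedSpace ℝ E]

/-- A ripple with amplitude profile `R` and phase `l * L x`. The factor `l⁻²` is chosen so that, for
large `l`, its gradient is small while its Hessian along `v, w` is close to
`L v * L w * (R x * cos (l * L x))`. -/
def corrugation (R : E → ℝ) (L : E →L[ℝ] ℝ) (l : ℝ) (x : E) : ℝ :=
  -(l ^ 2)⁻¹ * (R x * cos (l * L x))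

variable {R : E → ℝ} (L : E →L[ℝ] ℝ)

lemma contDiff_corrugation {n : ℕ∞ω} (hR : ContDiff ℝ n R) (l : ℝ) :
    ContDiff ℝ n (corrugation R L l) := by
  unfold corrugation
  fun_prop

lemma tsupport_corrugation_subset (R : E → ℝ) (l : ℝ) : tsupport (corrugation R L l) ⊆ tsupport R :=
  (tsupport_mul_subset_right (f := fun _ => -(l ^ 2)⁻¹)).trans tsupport_mul_subset_left

lemma dirDeriv_corrugation (hR : Differentiable ℝ R) (l : ℝ) (v : E) :
    dirDeriv v (corrugation R L l) =
      corrugation (dirDeriv v R) L l + fun x => l⁻¹ * L v * (R x * sin (l * L x)) := by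
  unfold corrugation
  rw [dirDeriv_const_mul (by fun_prop), dirDeriv_mul_cos hR]
  ext x
  simp only [Pi.add_apply]
  field_simp
  ring

lemma dirDeriv_dirDeriv_corrugation (hR : ContDiff ℝ ∞ R) {l : ℝ} (hl : l ≠ 0) (v w x : E) :
    dirDeriv w (dirDeriv v (corrugation R L l)) x = L v * L w * (R x * cos (l * L x)) +
      (corrugation (dirDeriv w (dirDeriv v R)) L l x +
        l⁻¹ * ((L w * dirDeriv v R x + L v * dirDeriv w R x) * sin (l * L x))) := by
  have hR' := hR.differentiable (by simp)
  have hdR := (contDiff_dirDeriv hR v).differentiable (by simp)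
  have hcor := (contDiff_corrugation L (contDiff_dirDeriv hR v) l).differentiable (by simp)
  rw [dirDeriv_corrugation L hR', dirDeriv_add hcor (by fun_prop), dirDeriv_corrugation L hdR,
    dirDeriv_const_mul (by fun_prop), dirDeriv_mul_sin hR']
  simp only [Pi.add_apply]
  field_simp
  ring

lemma tendstoUniformly_corrugation (hR : Continuous R) (hR' : HasCompactSupport R) :
    TendstoUniformly (corrugation R L) 0 atTop := by
  obtain ⟨C, hC⟩ := hR'.exists_bound_of_continuous hR
  have hdecay : Tendsto (fun l : ℝ => -(l ^ 2)⁻¹) atTop (𝓝 0) := by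
    simpa using (tendsto_pow_neg_atTop (𝕜 := ℝ) two_ne_zero).neg
  refine tendstoUniformly_mul_zero (C := C) hdecay fun l x => ?_
  rw [abs_mul]
  exact (mul_le_of_le_one_right (abs_nonneg _) (abs_cos_le_one _)).trans (hC x)

lemma tendstoUniformly_inv_mul_sin (hR : Continuous R) (hR' : HasCompactSupport R) :
    TendstoUniformly (fun l x => l⁻¹ * (R x * sin (l * L x))) 0 atTop := by
  obtain ⟨C, hC⟩ := hR'.exists_bound_of_continuous hR
  refine tendstoUniformly_mul_zero (C := C) tendsto_inv_atTop_zero fun l x => ?_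
  rw [abs_mul]
  exact (mul_le_of_le_one_right (abs_nonneg _) (abs_sin_le_one _)).trans (hC x)

lemma tendstoUniformly_dirDeriv_corrugation (hR : ContDiff ℝ ∞ R) (hR' : HasCompactSupport R)
    (v : E) : TendstoUniformly (fun l => dirDeriv v (corrugation R L l)) 0 atTop := by
  have hdR := tendstoUniformly_corrugation L (contDiff_dirDeriv hR v).continuous
    (hasCompactSupport_dirDeriv hR' v)
  have hsin := tendstoUniformly_inv_mul_sin L (hR.continuous.const_mul (L v)) hR'.mul_left
  simpa [dirDeriv_corrugation L (hR.differentiable (by simp)), Pi.add_def, mul_assoc]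
    using hdR.add hsin

lemma tendstoUniformly_dirDeriv_dirDeriv_corrugation (hR : ContDiff ℝ ∞ R)
    (hR' : HasCompactSupport R) (v w : E) :
    TendstoUniformly (fun l x => dirDeriv w (dirDeriv v (corrugation R L l)) x -
      L v * L w * (R x * cos (l * L x))) 0 atTop := by
  have hv := contDiff_dirDeriv hR v
  have hw := contDiff_dirDeriv hR w
  have hv' := hasCompactSupport_dirDeriv hR' v
  have hw' := hasCompactSupport_dirDeriv hR' w
  have hcor := tendstoUniformly_corrugation L (contDiff_dirDeriv hv w).continuous
    (hasCompactSupport_dirDeriv hv' w)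
  have hsin := tendstoUniformly_inv_mul_sin L
    ((hv.continuous.const_mul (L w)).add (hw.continuous.const_mul (L v)))
    (hv'.mul_left.add hw'.mul_left)
  have hsum := hcor.add hsin
  rw [add_zero, ← tendstoUniformlyOn_univ] at hsum
  rw [← tendstoUniformlyOn_univ]
  refine hsum.congr ?_
  filter_upwards [eventually_ne_atTop 0] with l hl x _
  simp [dirDeriv_dirDeriv_corrugation L hR hl]

lemma eventually_abs_dirDeriv_add_corrugation_lt {u : E → ℝ} {a b : ℝ} (hu : Differentiable ℝ u)
    (hR : ContDiff ℝ ∞ R) (hR' : HasCompactSupport R) (v : E) (hbound : ∀ x, |dirDeriv v u x| < a)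
    (hab : a < b) : ∀ᶠ l in atTop, ∀ x, |dirDeriv v (u + corrugation R L l) x| < b := by
  filter_upwards [eventually_abs_add_lt hbound (tendstoUniformly_dirDeriv_corrugation L hR hR' v)
    hab] with l hl
  simpa [dirDeriv_add hu ((contDiff_corrugation L hR l).differentiable (by simp))] using hl

lemma eventually_abs_dirDeriv_dirDeriv_add_corrugation_sub_lt {u g : E → ℝ} {a b : ℝ}
    (hu : ContDiff ℝ ∞ u) (hR : ContDiff ℝ ∞ R) (hR' : HasCompactSupport R) (v w : E)
    (hbound : ∀ x, |dirDeriv w (dirDeriv v u) x - g x| < a) (hab : a < b) :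
    ∀ᶠ l in atTop, ∀ x, |dirDeriv w (dirDeriv v (u + corrugation R L l)) x -
      (g x + L v * L w * (R x * cos (l * L x)))| < b := by
  filter_upwards [eventually_abs_add_lt hbound
    (tendstoUniformly_dirDeriv_dirDeriv_corrugation L hR hR' v w) hab] with l hl x
  rw [dirDeriv_dirDeriv_add hu (contDiff_corrugation L hR l), Pi.add_apply, add_sub_add_comm]
  exact hl x

end Corrugation

section Oscillation

variable {V E : Type*} [NormedAddCommGroup V] [NormedSpace ℝ V] [FiniteDimensional ℝ V]
  [MeasurableSpace V] [BorelSpace V] {μ : Measure V} [μ.IsAddHaarMeasure]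
  [NormedAddCommGroup E] [NormedSpace ℂ E] {L : V →L[ℝ] ℝ}

lemma tendsto_integral_fourierChar_smul (F : V → E) (hL : L ≠ 0) {s : ℝ} (hs : s ≠ 0) :
    Tendsto (fun l : ℝ => ∫ x, fourierChar (s * l * L x) • F x ∂μ) atTop (𝓝 0) := by
  have hfreq : Tendsto (fun l : ℝ => (-(s * l)) • L) atTop (cocompact (StrongDual ℝ V)) := by
    rw [← Metric.cobounded_eq_cocompact, ← tendsto_norm_atTop_iff_cobounded]
    simp only [norm_smul, norm_neg, norm_mul]
    exact (tendsto_norm_atTop_atTop.const_mul_atTop (norm_pos_iff.mpr hs)).atTop_mul_const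
      (norm_pos_iff.mpr hL)
  simpa [comp_def] using (_root_.tendsto_integral_exp_smul_cocompact F μ).comp hfreq

lemma tendsto_integral_cos_smul {F : V → E} (hF : Integrable F μ) (hL : L ≠ 0) :
    Tendsto (fun l : ℝ => ∫ x, cos (l * L x) • F x ∂μ) atTop (𝓝 0) := by
  have hint (s l : ℝ) : Integrable (fun x => fourierChar (s * l * L x) • F x) μ := by
    have hchar : Continuous fun x => fourierChar (s * l * L x) :=
      continuous_fourierChar.comp (by fun_prop)
    rw [← integrable_norm_iff (hchar.aestronglyMeasurable.fun_smul hF.1)]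
    simpa only [Circle.norm_smul] using hF.norm
  have hπ : (2 * π)⁻¹ ≠ 0 := by positivity
  have hsum := ((tendsto_integral_fourierChar_smul (μ := μ) F hL hπ).add
    (tendsto_integral_fourierChar_smul (μ := μ) F hL (neg_ne_zero.mpr hπ))).const_smul (1 / 2 : ℂ)
  rw [add_zero, smul_zero] at hsum
  refine hsum.congr fun l => ?_
  rw [← integral_add (hint _ _) (hint _ _), ← integral_smul]
  refine integral_congr_ae (.of_forall fun x => ?_)
  have hpos : 2 * π * ((2 * π)⁻¹ * l * L x) = l * L x := by field_simp
  have hneg : 2 * π * (-(2 * π)⁻¹ * l * L x) = -(l * L x) := by field_simp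
  simp only [Circle.smul_def, fourierChar_apply, hpos, hneg, ← add_smul, smul_smul,
    ← Complex.coe_smul, Complex.ofReal_cos, Complex.cos]
  congr 1
  push_cast
  ring

lemma tendsto_integral_add_cos_add_cos_sq {F₀ F₁ F₂ : V → E} (h₀ : Integrable F₀ μ)
    (h₁ : Integrable F₁ μ) (h₂ : Integrable F₂ μ) (hL : L ≠ 0) :
    Tendsto (fun l : ℝ => ∫ x, (F₀ x + cos (l * L x) • F₁ x + cos (l * L x) ^ 2 • F₂ x) ∂μ) atTop
      (𝓝 (∫ x, F₀ x ∂μ + (1 / 2 : ℝ) • ∫ x, F₂ x ∂μ)) := by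
  have hint (l : ℝ) {F : V → E} (hF : Integrable F μ) :
      Integrable (fun x => cos (l * L x) • F x) μ :=
    hF.bdd_smul (𝕜 := ℝ) 1 (by fun_prop) (.of_forall fun _ => abs_cos_le_one _)
  have hdouble : Tendsto (fun l : ℝ => 2 * l) atTop atTop :=
    tendsto_id.const_mul_atTop two_pos
  have hosc := (tendsto_integral_cos_smul h₁ hL).add
    (((tendsto_integral_cos_smul h₂ hL).comp hdouble).const_smul (1 / 2 : ℝ))
  have hlim := hosc.const_add (∫ x, F₀ x ∂μ + (1 / 2 : ℝ) • ∫ x, F₂ x ∂μ)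
  rw [smul_zero, add_zero, add_zero] at hlim
  refine hlim.congr fun l => ?_
  have h₂' := h₂.fun_smul (1 / 2 : ℝ)
  have hc₂ := (hint (2 * l) h₂).fun_smul (1 / 2 : ℝ)
  simp only [comp_apply]
  rw [← integral_smul, ← integral_smul, ← integral_add h₀ h₂', ← integral_add (hint l h₁) hc₂,
    ← integral_add (h₀.fun_add h₂') ((hint l h₁).fun_add hc₂)]
  refine integral_congr_ae (.of_forall fun x => ?_)
  have hcos : cos (2 * l * L x) = 2 * cos (l * L x) ^ 2 - 1 := by rw [← cos_two_mul, mul_assoc]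
  simp only [hcos]
  module

lemma tendsto_integral_add_cos_mul_one_add_cos {f g : V → ℂ} (hf : Integrable f μ)
    (hg : Integrable g μ) (hL : L ≠ 0) (c : ℂ) :
    Tendsto (fun l : ℝ => ∫ x, (g x + cos (l * L x) * f x) * (1 + c * cos (l * L x)) ∂μ) atTop
      (𝓝 (∫ x, g x ∂μ + c / 2 * ∫ x, f x ∂μ)) := by
  convert tendsto_integral_add_cos_add_cos_sq hg ((hg.const_mul c).add hf) (hf.const_mul c) hL
    using 2
  · refine integral_congr_ae (.of_forall fun x => ?_)
    simp only [Pi.add_apply, Complex.real_smul]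
    push_cast
    ring
  · rw [integral_const_mul, Complex.real_smul]
    push_cast
    ring

end Oscillation

section IntegralBounds

variable {X E : Type*} [MeasurableSpace X] {μ : Measure X} [NormedAddCommGroup E]

lemma norm_integral_le_mul_measureReal [NormedSpace ℝ E] {f : X → E} {K : Set X} {C : ℝ}
    (hK : μ K ≠ ⊤) (hfK : support f ⊆ K) (hC : ∀ x, ‖f x‖ ≤ C) :
    ‖∫ x, f x ∂μ‖ ≤ C * μ.real K := by
  rw [← setIntegral_eq_integral_of_forall_compl_eq_zero (support_subset_iff'.mp hfK)]
  exact norm_setIntegral_le_of_norm_le_const hK.lt_top fun x _ => hC x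

lemma integral_norm_le_integral_norm_add {f g : X → E} {K : Set X} {C : ℝ} (hf : Integrable f μ)
    (hg : Integrable g μ) (hK : μ K ≠ ⊤) (hfK : support f ⊆ K) (hgK : support g ⊆ K)
    (hC : ∀ x, ‖f x - g x‖ ≤ C) :
    ∫ x, ‖f x‖ ∂μ ≤ ∫ x, ‖g x‖ ∂μ + C * μ.real K := by
  rw [← sub_le_iff_le_add', ← integral_sub hf.norm hg.norm]
  refine (le_norm_self _).trans (norm_integral_le_mul_measureReal hK ?_ fun x => ?_)
  · refine support_subset_iff'.mpr fun x hx => ?_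
    simp [support_subset_iff'.mp hfK x hx, support_subset_iff'.mp hgK x hx]
  · exact (abs_norm_sub_norm_le _ _).trans (hC x)

end IntegralBounds

local notation "∂₁" => dirDeriv ((1 : ℝ), (0 : ℝ))
local notation "∂₂" => dirDeriv ((0 : ℝ), (1 : ℝ))

section RieszProduct

/-- The functional `(x, y) ↦ x + σ y`, whose multiples are the frequencies of the Riesz products.
Only `σ = ±1` is used, so that `∂₁ ∂₁` and `∂₂ ∂₂` act alike on its corrugations. -/
def diagonalForm (σ : ℝ) : ℝ × ℝ →L[ℝ] ℝ :=
  ContinuousLinearMap.fst ℝ ℝ ℝ + σ • ContinuousLinearMap.snd ℝ ℝ ℝ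

lemma diagonalForm_apply (σ : ℝ) (p : ℝ × ℝ) : diagonalForm σ p = p.1 + σ * p.2 := rfl

lemma diagonalForm_ne_zero (σ : ℝ) : diagonalForm σ ≠ 0 := fun h => by
  simpa [diagonalForm_apply] using DFunLike.congr_fun h (1, 0)

/-- Up to a uniform error `δ`, the potential `u` has zero gradient, both of its pure second
derivatives equal to `R - R₀`, and mixed second derivative `S`; here `R` stands for a nonnegative
Riesz product with initial factor `R₀`. -/
structure IsApproxHessian (R₀ : ℝ × ℝ → ℝ) (δ : ℝ) (u R S : ℝ × ℝ → ℝ) : Prop where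
  contDiff_potential : ContDiff ℝ ∞ u
  contDiff_density : ContDiff ℝ ∞ R
  continuous_mixed : Continuous S
  tsupport_potential : tsupport u ⊆ tsupport R₀
  tsupport_density : tsupport R ⊆ tsupport R₀
  tsupport_mixed : tsupport S ⊆ tsupport R₀
  density_nonneg : ∀ p, 0 ≤ R p
  abs_deriv_fst : ∀ p, |∂₁ u p| < δ
  abs_deriv_snd : ∀ p, |∂₂ u p| < δ
  abs_deriv_fst_fst : ∀ p, |∂₁ (∂₁ u) p - (R p - R₀ p)| < δ
  abs_deriv_snd_snd : ∀ p, |∂₂ (∂₂ u) p - (R p - R₀ p)| < δ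
  abs_deriv_fst_snd : ∀ p, |∂₂ (∂₁ u) p - S p| < δ

lemma isApproxHessian_zero {R₀ : ℝ × ℝ → ℝ} (hR₀ : ContDiff ℝ ∞ R₀) (hpos : ∀ p, 0 ≤ R₀ p) {δ : ℝ}
    (hδ : 0 < δ) : IsApproxHessian R₀ δ 0 R₀ 0 := by
  have hzero (v : ℝ × ℝ) : dirDeriv v (0 : ℝ × ℝ → ℝ) = 0 := by ext; simp [dirDeriv]
  have hsupp : tsupport (0 : ℝ × ℝ → ℝ) ⊆ tsupport R₀ := by simp [tsupport]
  constructor <;> first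
    | exact contDiff_const
    | exact continuous_const
    | assumption
    | simp [hzero, hδ]

namespace IsApproxHessian

variable {R₀ u R S : ℝ × ℝ → ℝ} {δ : ℝ}

lemma hasCompactSupport_density (h : IsApproxHessian R₀ δ u R S) (hR₀ : HasCompactSupport R₀) :
    HasCompactSupport R :=
  hR₀.of_isClosed_subset (isClosed_tsupport _) h.tsupport_density

lemma hasCompactSupport_potential (h : IsApproxHessian R₀ δ u R S) (hR₀ : HasCompactSupport R₀) :
    HasCompactSupport u :=
  hR₀.of_isClosed_subset (isClosed_tsupport _) h.tsupport_potential

lemma hasCompactSupport_mixed (h : IsApproxHessian R₀ δ u R S) (hR₀ : HasCompactSupport R₀) :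
    HasCompactSupport S :=
  hR₀.of_isClosed_subset (isClosed_tsupport _) h.tsupport_mixed

lemma eventually_add_corrugation (h : IsApproxHessian R₀ δ u R S) (hR₀ : HasCompactSupport R₀)
    {σ δ' : ℝ} (hσ : σ ^ 2 = 1) (hδ : δ < δ') :
    ∀ᶠ l in atTop, IsApproxHessian R₀ δ' (u + corrugation R (diagonalForm σ) l)
      (fun p => R p * (1 + cos (l * diagonalForm σ p)))
      (fun p => S p + σ * (R p * cos (l * diagonalForm σ p))) := by
  have hu := h.contDiff_potential
  have hR := h.contDiff_density
  have hRcont := hR.continuous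
  have hScont := h.continuous_mixed
  have hgrad := eventually_abs_dirDeriv_add_corrugation_lt (a := δ) (b := δ') (diagonalForm σ)
    (hu.differentiable (by simp)) hR (h.hasCompactSupport_density hR₀)
  have hhess (g : ℝ × ℝ → ℝ) := eventually_abs_dirDeriv_dirDeriv_add_corrugation_sub_lt (g := g)
    (a := δ) (b := δ') (diagonalForm σ) hu hR (h.hasCompactSupport_density hR₀)
  filter_upwards [hgrad (1, 0) h.abs_deriv_fst hδ, hgrad (0, 1) h.abs_deriv_snd hδ,
    hhess _ (1, 0) (1, 0) h.abs_deriv_fst_fst hδ, hhess _ (0, 1) (0, 1) h.abs_deriv_snd_snd hδ,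
    hhess _ (1, 0) (0, 1) h.abs_deriv_fst_snd hδ] with l h₁ h₂ h₁₁ h₂₂ h₁₂
  have hdensity (p : ℝ × ℝ) : R p * (1 + cos (l * diagonalForm σ p)) - R₀ p =
      R p - R₀ p + R p * cos (l * diagonalForm σ p) := by ring
  have hfst : diagonalForm σ (1, 0) = 1 := by simp [diagonalForm_apply]
  have hsnd : diagonalForm σ (0, 1) = σ := by simp [diagonalForm_apply]
  simp only [hfst, hsnd, ← sq, hσ, one_mul, one_pow] at h₁₁ h₂₂ h₁₂
  exact {
    contDiff_potential := hu.add (contDiff_corrugation _ hR l)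
    contDiff_density := by fun_prop
    continuous_mixed := by fun_prop
    tsupport_potential := (tsupport_add _ _).trans <| union_subset h.tsupport_potential <|
      (tsupport_corrugation_subset _ R l).trans h.tsupport_density
    tsupport_density := tsupport_mul_subset_left.trans h.tsupport_density
    tsupport_mixed := (tsupport_add _ _).trans <| union_subset h.tsupport_mixed <|
      (tsupport_mul_subset_right.trans tsupport_mul_subset_left).trans h.tsupport_density
    density_nonneg := fun p =>
      mul_nonneg (h.density_nonneg p) (by linarith [neg_one_le_cos (l * diagonalForm σ p)])
    abs_deriv_fst := h₁
    abs_deriv_snd := h₂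
    abs_deriv_fst_fst := by simpa only [hdensity] using h₁₁
    abs_deriv_snd_snd := by simpa only [hdensity] using h₂₂
    abs_deriv_fst_snd := h₁₂ }

lemma integrable_density (h : IsApproxHessian R₀ δ u R S) (hR₀ : HasCompactSupport R₀) :
    Integrable R :=
  h.contDiff_density.continuous.integrable_of_hasCompactSupport (h.hasCompactSupport_density hR₀)

lemma integrable_mixed (h : IsApproxHessian R₀ δ u R S) (hR₀ : HasCompactSupport R₀) :
    Integrable S :=
  h.continuous_mixed.integrable_of_hasCompactSupport (h.hasCompactSupport_mixed hR₀)

lemma tsupport_dirDeriv_dirDeriv_subset (h : IsApproxHessian R₀ δ u R S) (v w : ℝ × ℝ) :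
    tsupport (dirDeriv w (dirDeriv v u)) ⊆ tsupport R₀ :=
  (tsupport_dirDeriv_subset _ _).trans <|
    (tsupport_dirDeriv_subset _ _).trans h.tsupport_potential

lemma integrable_dirDeriv_dirDeriv (h : IsApproxHessian R₀ δ u R S) (hR₀ : HasCompactSupport R₀)
    (v w : ℝ × ℝ) : Integrable (dirDeriv w (dirDeriv v u)) :=
  (contDiff_dirDeriv (contDiff_dirDeriv h.contDiff_potential v)
    w).continuous.integrable_of_hasCompactSupport
    (hR₀.of_isClosed_subset (isClosed_tsupport _) (h.tsupport_dirDeriv_dirDeriv_subset v w))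

lemma support_density_sub_subset (h : IsApproxHessian R₀ δ u R S) :
    support (fun p => R p - R₀ p) ⊆ tsupport R₀ :=
  (support_sub _ _).trans <|
    union_subset ((subset_tsupport _).trans h.tsupport_density) (subset_tsupport _)

lemma integral_density_le (h : IsApproxHessian R₀ δ u R S) (hR₀ : HasCompactSupport R₀)
    (hint : Integrable R₀) : ∫ p, R p ≤ (∫ p, R₀ p) + δ * volume.real (tsupport R₀) := by
  have hR := h.integrable_density hR₀
  have hsub : Integrable fun p => R p - R₀ p := hR.sub hint
  have hu := h.integrable_dirDeriv_dirDeriv hR₀ (1, 0) (1, 0)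
  have hzero : ∫ p, ∂₁ (∂₁ u) p = 0 :=
    integral_dirDeriv_eq_zero ((contDiff_dirDeriv h.contDiff_potential _).of_le (by simp))
      (hasCompactSupport_dirDeriv (h.hasCompactSupport_potential hR₀) _) _
  have herr : ‖∫ p, (∂₁ (∂₁ u) p - (R p - R₀ p))‖ ≤ δ * volume.real (tsupport R₀) :=
    norm_integral_le_mul_measureReal hR₀.measure_lt_top.ne
      ((support_sub _ _).trans <| union_subset
        ((subset_tsupport _).trans (h.tsupport_dirDeriv_dirDeriv_subset _ _))
        h.support_density_sub_subset)
      fun p => (h.abs_deriv_fst_fst p).le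
  rw [integral_sub hu hsub, hzero, integral_sub hR hint, zero_sub, norm_neg] at herr
  linarith [(le_norm_self _).trans herr]

lemma integral_abs_le_of_abs_sub_lt (h : IsApproxHessian R₀ δ u R S) (hR₀ : HasCompactSupport R₀)
    (hint : Integrable R₀) (hpos : ∀ p, 0 ≤ R₀ p) {w : ℝ × ℝ → ℝ} (hw : Integrable w)
    (hsupp : tsupport w ⊆ tsupport R₀) (hclose : ∀ p, |w p - (R p - R₀ p)| < δ) :
    ∫ p, |w p| ≤ 2 * ((∫ p, R₀ p) + δ * volume.real (tsupport R₀)) := by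
  have hR := h.integrable_density hR₀
  have hsub : Integrable fun p => R p - R₀ p := hR.sub hint
  have hdiff : ∫ p, |R p - R₀ p| ≤ (∫ p, R p) + ∫ p, R₀ p := by
    rw [← integral_add hR hint]
    refine integral_mono hsub.abs (hR.add hint) fun p => ?_
    exact abs_sub_le_of_nonneg_of_le (h.density_nonneg p) (by simpa using hpos p)
      (hpos p) (by simpa using h.density_nonneg p)
  calc ∫ p, |w p|
      ≤ (∫ p, |R p - R₀ p|) + δ * volume.real (tsupport R₀) :=
        integral_norm_le_integral_norm_add hw hsub hR₀.measure_lt_top.ne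
          ((subset_tsupport _).trans hsupp) h.support_density_sub_subset fun p => (hclose p).le
    _ ≤ 2 * ((∫ p, R₀ p) + δ * volume.real (tsupport R₀)) := by
        linarith [h.integral_density_le hR₀ hint]

lemma integral_abs_mixed_le (h : IsApproxHessian R₀ δ u R S) (hR₀ : HasCompactSupport R₀) :
    ∫ p, |S p| ≤ (∫ p, |∂₂ (∂₁ u) p|) + δ * volume.real (tsupport R₀) := by
  refine integral_norm_le_integral_norm_add (h.integrable_mixed hR₀)
    (h.integrable_dirDeriv_dirDeriv hR₀ _ _) hR₀.measure_lt_top.ne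
    ((subset_tsupport _).trans h.tsupport_mixed)
    ((subset_tsupport _).trans (h.tsupport_dirDeriv_dirDeriv_subset _ _)) fun p => ?_
  rw [norm_sub_rev]
  exact (h.abs_deriv_fst_snd p).le

end IsApproxHessian

end RieszProduct

section RieszMoments

/-- The pairs `(∫ R ψ, ∫ S ψ)` in which `R` and `S` are the density and the mixed derivative of an
approximate Hessian and the test function `ψ` obeys the bound satisfied by a product of `k` factors
`1 ± i α cos`. Testing against such products is what detects the growth of `∫ |S|`. -/
def rieszMoments (R₀ : ℝ × ℝ → ℝ) (α : ℝ) (k : ℕ) (δ : ℝ) : Set (ℂ × ℂ) :=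
  {z | ∃ (u R S : ℝ × ℝ → ℝ) (ψ : ℝ × ℝ → ℂ), IsApproxHessian R₀ δ u R S ∧ Continuous ψ ∧
    (∀ p, ‖ψ p‖ ^ 2 ≤ (1 + α ^ 2) ^ k) ∧ z = (∫ p, R p * ψ p, ∫ p, S p * ψ p)}

/-- The effect on `(∫ R ψ, ∫ S ψ)`, in the high-frequency limit, of adding one corrugation in the
direction `σ` to the potential and one factor `1 + i σ α cos` to `ψ`. -/
def rieszStep (α σ : ℝ) (z : ℂ × ℂ) : ℂ × ℂ :=
  (z.1 + (σ * α : ℝ) * Complex.I / 2 * z.1, z.2 + (σ * α : ℝ) * Complex.I / 2 * (σ * z.1))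

lemma continuous_rieszStep (α σ : ℝ) : Continuous (rieszStep α σ) := by
  unfold rieszStep
  fun_prop

lemma rieszStep_neg_one_rieszStep_one (α : ℝ) (z : ℂ × ℂ) :
    rieszStep α (-1) (rieszStep α 1 z) =
      ((1 + α ^ 2 / 4 : ℝ) * z.1, z.2 + (α * Complex.I - (α ^ 2 / 4 : ℝ)) * z.1) := by
  ext1 <;> simp only [rieszStep] <;> push_cast
  · linear_combination (-α ^ 2 / 4 * z.1) * Complex.I_sq
  · linear_combination (α ^ 2 / 4 * z.1) * Complex.I_sq

lemma norm_one_add_mul_I_mul_sq_le {a t : ℝ} (ht : |t| ≤ 1) :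
    ‖1 + a * Complex.I * t‖ ^ 2 ≤ 1 + a ^ 2 := by
  have hre : (1 + a * Complex.I * t : ℂ) = (1 : ℝ) + (a * t : ℝ) * Complex.I := by
    push_cast
    ring
  rw [← Complex.normSq_eq_norm_sq, hre, Complex.normSq_add_mul_I]
  nlinarith [sq_nonneg a, (sq_le_one_iff_abs_le_one t).mpr ht]

variable {R₀ : ℝ × ℝ → ℝ} {α σ δ δ' : ℝ} {k : ℕ} {z : ℂ × ℂ}

lemma mapsTo_rieszStep_closure (hR₀ : HasCompactSupport R₀) (hσ : σ ^ 2 = 1) (hδ : δ < δ') :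
    MapsTo (rieszStep α σ) (rieszMoments R₀ α k δ) (closure (rieszMoments R₀ α (k + 1) δ')) := by
  rintro _ ⟨u, R, S, ψ, h, hψ, hbound, rfl⟩
  have hRcont := h.contDiff_density.continuous
  have hScont := h.continuous_mixed
  have hR : Integrable fun p => R p * ψ p :=
    Continuous.integrable_of_hasCompactSupport (by fun_prop)
      ((h.hasCompactSupport_density hR₀).comp_left Complex.ofReal_zero).mul_right
  have hS : Integrable fun p => S p * ψ p :=
    Continuous.integrable_of_hasCompactSupport (by fun_prop)
      ((h.hasCompactSupport_mixed hR₀).comp_left Complex.ofReal_zero).mul_right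
  have hlim := (tendsto_integral_add_cos_mul_one_add_cos hR hR (diagonalForm_ne_zero σ)
    ((σ * α : ℝ) * Complex.I)).prodMk_nhds (tendsto_integral_add_cos_mul_one_add_cos
      (hR.const_mul (σ : ℂ)) hS (diagonalForm_ne_zero σ) ((σ * α : ℝ) * Complex.I))
  rw [integral_const_mul] at hlim
  refine mem_closure_of_tendsto hlim ?_
  filter_upwards [h.eventually_add_corrugation hR₀ hσ hδ] with l hl
  refine ⟨_, _, _, fun p => ψ p * (1 + (σ * α : ℝ) * Complex.I * cos (l * diagonalForm σ p)), hl,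
    by fun_prop, fun p => ?_, ?_⟩
  · rw [norm_mul, mul_pow, pow_succ (1 + α ^ 2)]
    refine mul_le_mul (hbound p) ?_ (by positivity) (by positivity)
    simpa only [mul_pow, hσ, one_mul] using
      norm_one_add_mul_I_mul_sq_le (a := σ * α) (abs_cos_le_one (l * diagonalForm σ p))
  · congr 1 <;> refine integral_congr_ae (.of_forall fun p => ?_) <;> push_cast <;> ring

lemma rieszStep_mem_closure (hR₀ : HasCompactSupport R₀) (hσ : σ ^ 2 = 1)
    (hz : ∀ δ > 0, z ∈ closure (rieszMoments R₀ α k δ)) :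
    ∀ δ > 0, rieszStep α σ z ∈ closure (rieszMoments R₀ α (k + 1) δ) := fun δ hδ => by
  simpa only [closure_closure] using map_mem_closure (continuous_rieszStep α σ)
    (hz (δ / 2) (half_pos hδ)) (mapsTo_rieszStep_closure hR₀ hσ (half_lt_self hδ))

lemma exists_mem_closure_rieszMoments (hsmooth : ContDiff ℝ ∞ R₀) (hR₀ : HasCompactSupport R₀)
    (hpos : ∀ p, 0 ≤ R₀ p) (hα : 0 ≤ α) (m : ℕ) :
    ∃ (J : ℝ) (I : ℂ), ∫ p, R₀ p ≤ J ∧ m * (α * ∫ p, R₀ p) ≤ I.im ∧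
      ∀ δ > 0, ((J : ℂ), I) ∈ closure (rieszMoments R₀ α (2 * m) δ) := by
  induction m with
  | zero =>
    refine ⟨∫ p, R₀ p, 0, le_rfl, by simp, fun δ hδ => subset_closure ?_⟩
    exact ⟨0, R₀, 0, 1, isApproxHessian_zero hsmooth hpos hδ, continuous_const, by simp,
      by simp [integral_complex_ofReal]⟩
  | succ m ih =>
    obtain ⟨J, I, hJ, hI, hmem⟩ := ih
    have hJ₀ : 0 ≤ J := (integral_nonneg hpos).trans hJ
    have hmem' := rieszStep_mem_closure hR₀ (σ := -1) (by simp)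
      (rieszStep_mem_closure hR₀ (σ := 1) (by simp) hmem)
    simp only [rieszStep_neg_one_rieszStep_one, ← Complex.ofReal_mul] at hmem'
    refine ⟨(1 + α ^ 2 / 4) * J, _, ?_, ?_, hmem'⟩
    · nlinarith [mul_nonneg (sq_nonneg α) hJ₀]
    · simp only [Complex.add_im, Complex.im_mul_ofReal, Complex.sub_im, Complex.im_ofReal_mul,
        Complex.I_im, Complex.ofReal_im]
      push_cast
      nlinarith [mul_le_mul_of_nonneg_left hJ hα]

lemma one_add_inv_sq_pow_le_exp_two (n : ℕ) : (1 + (n : ℝ)⁻¹ ^ 2) ^ (2 * n ^ 2) ≤ exp 2 := by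
  calc (1 + (n : ℝ)⁻¹ ^ 2) ^ (2 * n ^ 2)
      ≤ exp ((n : ℝ)⁻¹ ^ 2) ^ (2 * n ^ 2) := by
        gcongr
        linarith [add_one_le_exp ((n : ℝ)⁻¹ ^ 2)]
    _ = exp (2 * (n * (n : ℝ)⁻¹) ^ 2) := by
        rw [← exp_nat_mul]
        push_cast
        ring_nf
    _ ≤ exp 2 := by
        gcongr
        exact mul_le_of_le_one_right two_pos.le (pow_le_one₀ (by positivity) mul_inv_le_one)

lemma exists_isApproxHessian_lt_norm_integral (hsmooth : ContDiff ℝ ∞ R₀)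
    (hR₀ : HasCompactSupport R₀) (hpos : ∀ p, 0 ≤ R₀ p) (hδ : 0 < δ) (n : ℕ) :
    ∃ (u R S : ℝ × ℝ → ℝ) (ψ : ℝ × ℝ → ℂ), IsApproxHessian R₀ δ u R S ∧
      (∀ p, ‖ψ p‖ ≤ exp 1) ∧ n * ∫ p, R₀ p < ‖∫ p, S p * ψ p‖ + 1 := by
  obtain ⟨J, I, -, hI, hmem⟩ := exists_mem_closure_rieszMoments (α := (n : ℝ)⁻¹) hsmooth hR₀ hpos
    (by positivity) (n ^ 2)
  obtain ⟨_, ⟨u, R, S, ψ, h, -, hψ, rfl⟩, hdist⟩ :=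
    Metric.mem_closure_iff.mp (hmem δ hδ) 1 one_pos
  refine ⟨u, R, S, ψ, h, fun p => ?_, ?_⟩
  · refine le_of_sq_le_sq ((hψ p).trans ?_) (exp_pos 1).le
    rw [← exp_nat_mul]
    simpa using one_add_inv_sq_pow_le_exp_two n
  · have hdist' : ‖I - ∫ p, S p * ψ p‖ < 1 := by
      rw [← dist_eq_norm]
      exact (le_max_right _ _).trans_lt hdist
    have hn : (n : ℝ) ^ 2 * (n : ℝ)⁻¹ = n := by
      rw [sq, mul_self_mul_inv]
    rw [← mul_assoc, Nat.cast_pow, hn] at hI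
    linarith [norm_sub_norm_le I (∫ p, S p * ψ p), (le_abs_self _).trans (Complex.abs_im_le_norm I)]

end RieszMoments

section Ornstein

lemma exists_contDiff_nonneg_integral_pos {E : Type*} [NormedAddCommGroup E] [NormedSpace ℝ E]
    [FiniteDimensional ℝ E] [MeasurableSpace E] [BorelSpace E] (μ : Measure E)
    [μ.IsOpenPosMeasure] [IsFiniteMeasureOnCompacts μ] {U : Set E} {c : E} (hU : U ∈ 𝓝 c) :
    ∃ R₀ : E → ℝ, ContDiff ℝ ∞ R₀ ∧ HasCompactSupport R₀ ∧ tsupport R₀ ⊆ U ∧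
      (∀ p, 0 ≤ R₀ p) ∧ 0 < ∫ p, R₀ p ∂μ := by
  obtain ⟨R₀, hsupp, hcpt, hsmooth, hrange, hc⟩ := exists_contDiff_tsupport_subset (n := ⊤) hU
  have hpos (p) : 0 ≤ R₀ p := (hrange (mem_range_self p)).1
  refine ⟨R₀, hsmooth, hcpt, hsupp, hpos, ?_⟩
  exact hsmooth.continuous.integral_pos_of_hasCompactSupport_nonneg_nonzero hcpt hpos
    (x := c) (by simp [hc])

lemma ornstein_noninequality {U : Set (ℝ × ℝ)} {c : ℝ × ℝ} (hU : U ∈ 𝓝 c) :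
    ∃ C, ∀ M, ∃ u : ℝ × ℝ → ℝ, ContDiff ℝ ∞ u ∧ HasCompactSupport u ∧ tsupport u ⊆ U ∧
      (∀ p, |∂₁ u p| ≤ 1) ∧ (∀ p, |∂₂ u p| ≤ 1) ∧
      ∫ p, |∂₁ (∂₁ u) p| ≤ C ∧ ∫ p, |∂₂ (∂₂ u) p| ≤ C ∧ M < ∫ p, |∂₂ (∂₁ u) p| := by
  obtain ⟨R₀, hsmooth, hR₀, hsupp, hpos, hmass⟩ := exists_contDiff_nonneg_integral_pos volume hU
  have hint : Integrable R₀ := hsmooth.continuous.integrable_of_hasCompactSupport hR₀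
  set V := volume.real (tsupport R₀)
  refine ⟨2 * ((∫ p, R₀ p) + 1 * V), fun M => ?_⟩
  obtain ⟨n, hn⟩ := exists_nat_gt ((exp 1 * (M + V) + 1) / ∫ p, R₀ p)
  obtain ⟨u, R, S, ψ, h, hψ, hlarge⟩ :=
    exists_isApproxHessian_lt_norm_integral hsmooth hR₀ hpos one_pos n
  refine ⟨u, h.contDiff_potential, h.hasCompactSupport_potential hR₀,
    h.tsupport_potential.trans hsupp, fun p => (h.abs_deriv_fst p).le,
    fun p => (h.abs_deriv_snd p).le,
    h.integral_abs_le_of_abs_sub_lt hR₀ hint hpos (h.integrable_dirDeriv_dirDeriv hR₀ _ _)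
      (h.tsupport_dirDeriv_dirDeriv_subset _ _) h.abs_deriv_fst_fst,
    h.integral_abs_le_of_abs_sub_lt hR₀ hint hpos (h.integrable_dirDeriv_dirDeriv hR₀ _ _)
      (h.tsupport_dirDeriv_dirDeriv_subset _ _) h.abs_deriv_snd_snd, ?_⟩
  have hduality : ‖∫ p, S p * ψ p‖ ≤ exp 1 * ∫ p, |S p| := by
    rw [← integral_const_mul]
    refine norm_integral_le_of_norm_le ((h.integrable_mixed hR₀).abs.const_mul _)
      (.of_forall fun p => ?_)
    rw [norm_mul, Complex.norm_real, Real.norm_eq_abs, mul_comm]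
    gcongr
    exact hψ p
  rw [div_lt_iff₀ hmass] at hn
  have hS : exp 1 * (M + V) < exp 1 * ∫ p, |S p| := by linarith
  linarith [lt_of_mul_lt_mul_left hS (exp_pos 1).le, h.integral_abs_mixed_le hR₀,
    one_mul V]

end Ornstein

section LineIntegrals

variable {f : ℝ × ℝ → ℝ}

lemma intX_dirDeriv (hf : ContDiff ℝ 1 f) (h : ∀ y, f (-1, y) = 0) : intX (∂₁ f) = f := by
  ext p
  have hderiv (t : ℝ) : HasDerivAt (fun t => f (t, p.2)) (∂₁ f (t, p.2)) t :=
    (hf.differentiable one_ne_zero (t, p.2)).hasFDerivAt.comp_hasDerivAt t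
      ((hasDerivAt_id t).prodMk (hasDerivAt_const t p.2))
  have hcont : Continuous (∂₁ f) := (hf.continuous_fderiv one_ne_zero).clm_apply continuous_const
  rw [intX, intervalIntegral.integral_eq_sub_of_hasDerivAt (fun t _ => hderiv t)
    (Continuous.intervalIntegrable (by fun_prop) _ _), h, sub_zero]

lemma intY_dirDeriv (hf : ContDiff ℝ 1 f) (h : ∀ x, f (x, -1) = 0) : intY (∂₂ f) = f := by
  ext p
  have hderiv (t : ℝ) : HasDerivAt (fun t => f (p.1, t)) (∂₂ f (p.1, t)) t :=
    (hf.differentiable one_ne_zero (p.1, t)).hasFDerivAt.comp_hasDerivAt t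
      ((hasDerivAt_const t p.1).prodMk (hasDerivAt_id t))
  have hcont : Continuous (∂₂ f) := (hf.continuous_fderiv one_ne_zero).clm_apply continuous_const
  rw [intY, intervalIntegral.integral_eq_sub_of_hasDerivAt (fun t _ => hderiv t)
    (Continuous.intervalIntegrable (by fun_prop) _ _), h, sub_zero]

lemma apply_eq_zero_of_tsupport_subset_ball {E : Type*} [SeminormedAddCommGroup E] {g : E → ℝ}
    {r : ℝ} (h : tsupport g ⊆ Metric.ball 0 r) {x : E} (hx : r ≤ ‖x‖) : g x = 0 :=
  image_eq_zero_of_notMem_tsupport fun hmem => hx.not_gt (mem_ball_zero_iff.mp (h hmem))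

lemma ball_zero_one_subset_Icc : Metric.ball (0 : ℝ × ℝ) 1 ⊆ Icc (-1, -1) (1, 1) := by
  rw [← Icc_prod_Icc, ← Prod.mk_zero_zero, ← ball_prod_same, ball_eq_Ioo]
  simpa using Set.prod_mono Ioo_subset_Icc_self Ioo_subset_Icc_self

end LineIntegrals

/-- For every `ε > 0` there exists a nonzero `q ∈ C_0^∞(ℝ²)` supported in `[-1,1]²`, with
all horizontal and vertical line integrals vanishing, such that
`‖∂_x q^y‖_{L¹} + ‖∂_y q^x‖_{L¹} + ‖q^x‖_∞ + ‖q^y‖_∞ < ε ‖q‖_{L¹}`. -/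
theorem smoothed_ornstein_building_block (ε : ℝ) (hε : 0 < ε) :
    ∃ q : ℝ × ℝ → ℝ, ContDiff ℝ (⊤ : ℕ∞) q ∧ HasCompactSupport q ∧
      tsupport q ⊆ Set.Icc ((-1 : ℝ), (-1 : ℝ)) (1, 1) ∧ q ≠ 0 ∧
      (∀ y₀ : ℝ, ∫ x in (-1 : ℝ)..1, q (x, y₀) = 0) ∧
      (∀ x₀ : ℝ, ∫ y in (-1 : ℝ)..1, q (x₀, y) = 0) ∧
      (∫ p, |pd1 (intY q) p|) + (∫ p, |pd2 (intX q) p|) +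
          (⨆ p, |intX q p|) + (⨆ p, |intY q p|) <
        ε * ∫ p, |q p| := by
  obtain ⟨C, hC⟩ := ornstein_noninequality (Metric.ball_mem_nhds (0 : ℝ × ℝ) one_pos)
  obtain ⟨u, hu, hcpt, hsupp, h₁, h₂, h₁₁, h₂₂, h₁₂⟩ := hC (max 0 ((2 * C + 2) / ε))
  have hvanish (v : ℝ × ℝ) {p : ℝ × ℝ} : 1 ≤ ‖p‖ → dirDeriv v u p = 0 :=
    apply_eq_zero_of_tsupport_subset_ball ((tsupport_dirDeriv_subset v u).trans hsupp)
  have hsmooth (v : ℝ × ℝ) : ContDiff ℝ 1 (dirDeriv v u) := (contDiff_dirDeriv hu v).of_le (by simp)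
  have hX : intX (∂₂ (∂₁ u)) = ∂₂ u := by
    rw [dirDeriv_comm (contDiff_infty.mp hu 2)]
    exact intX_dirDeriv (hsmooth _) fun y => hvanish _ (by simp [Prod.norm_def])
  have hY : intY (∂₂ (∂₁ u)) = ∂₁ u :=
    intY_dirDeriv (hsmooth _) fun x => hvanish _ (by simp [Prod.norm_def])
  refine ⟨∂₂ (∂₁ u), contDiff_dirDeriv (contDiff_dirDeriv hu _) _,
    hasCompactSupport_dirDeriv (hasCompactSupport_dirDeriv hcpt _) _,
    (tsupport_dirDeriv_subset _ _).trans <| (tsupport_dirDeriv_subset _ _).trans <|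
      hsupp.trans ball_zero_one_subset_Icc,
    fun h => by simp [h] at h₁₂,
    fun y => (congrFun hX (1, y)).trans (hvanish _ (by simp [Prod.norm_def])),
    fun x => (congrFun hY (x, 1)).trans (hvanish _ (by simp [Prod.norm_def])), ?_⟩
  have hlarge := (div_lt_iff₀' hε).mp ((le_max_right _ _).trans_lt h₁₂)
  rw [hX, hY]
  change (∫ p, |∂₁ (∂₁ u) p|) + (∫ p, |∂₂ (∂₂ u) p|) + _ + _ < _
  linarith [ciSup_le h₁, ciSup_le h₂]
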